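/- arXiv:1101.3252 — 2 statements merged into one kernel-verified Lean document; each statement's English description precedes it below -/
import Mathlib

section
/- (Marstrand's projection theorem) If K ⊂ ℝ² is a Borel set with Hausdorff dimension greater than 1, then for Lebesgue-almost every θ ∈ [−π/2, π/2], the orthogonal projection proj_θ(K) of K onto the line L_θ = ℝ·(cos θ, sin θ) has positive one-dimensional Lebesgue measure. -/
/-! The proof is the potential-theoretic one, arranged so that only discrete measures occur.

Fix `1 < s < dimH K` and let `content (wt s)` be the dyadic content with weights `2 ^ (-n s)` on
squares of level `n ≥ 0`. Since `μH[s] K = ∞`, this content is positive on `K`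
(`hausdorffMeasure_eq_zero`). Because dyadic squares are nested or disjoint, the content is strongly
subadditive and continuous along increasing unions of arbitrary sets (`content_iUnion_le`); as a
Borel set is a continuous image of Baire space, Choquet's argument gives a compact `C ⊆ K` of
positive content (`exists_compact_content_pos`).

For each `n`, strong subadditivity and a greedy choice of masses give a measure `μ n` on `C` of mass
`m = content (wt s) C` with at most `2 ^ (-k s)` on each dyadic square of level `k ≤ n`
(`exists_frostman`). Since `s > 1`, its energy truncated at scale `2⁻ⁿ` is bounded independently of
`n`, so the integral over `θ` of
`F n θ = 2 ^ n * (μ n × μ n) {(x, y) | |proj θ (x - y)| ≤ 2 * 2⁻ⁿ}` is bounded as well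
(`lintegral_nearPairs_le`). By Fatou's lemma, `liminf F n θ < ∞` for almost every `θ`. On the other
hand the Cauchy–Schwarz inequality gives `2 * m ^ 2 ≤ volume (P n) * F n θ`, where `P n` is the
`2⁻ⁿ`-neighbourhood of the compact set `proj θ '' C` (`sq_mass_le`). As `volume (P n)` tends to
`volume (proj θ '' C)`, that volume cannot vanish.
-/

open MeasureTheory Set Metric ENNReal Real

noncomputable section

/-- The plane with the Euclidean metric. -/
abbrev E := EuclideanSpace ℝ (Fin 2)

/-- The half-open dyadic square `[a·2⁻ⁱ, (a+1)·2⁻ⁱ) × [b·2⁻ⁱ, (b+1)·2⁻ⁱ)`. -/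
def dyadicSq (i a b : ℤ) : Set E :=
  {p | p 0 ∈ Set.Ico ((a : ℝ) * 2 ^ (-i)) ((a + 1 : ℝ) * 2 ^ (-i)) ∧
       p 1 ∈ Set.Ico ((b : ℝ) * 2 ^ (-i)) ((b + 1 : ℝ) * 2 ^ (-i))}

/-- A dyadic square is an element of some family `𝒟ᵢ`. -/
def IsDyadicSquare (S : Set E) : Prop := ∃ i a b : ℤ, S = dyadicSq i a b
/-- The orthogonal projection onto the line `L_θ = ℝ·(cos θ, sin θ)`, identified with ℝ
via the isometry `t·v_θ ↦ t`. -/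
def proj (θ : ℝ) (p : E) : ℝ := p 0 * Real.cos θ + p 1 * Real.sin θ

/-! ### The dyadic content -/

/-- The index of the dyadic square of side `2⁻ⁿ` containing `p`. -/
def cell (n : ℕ) (p : E) : ℤ × ℤ := (⌊(2 : ℝ) ^ n * p 0⌋, ⌊(2 : ℝ) ^ n * p 1⌋)

/-- Dyadic squares are nested: the square at level `n` determines the one at each coarser level. -/
lemma cell_coarsen {m n : ℕ} (h : m ≤ n) {p p' : E} (hc : cell n p = cell n p') :
    cell m p = cell m p' := by
  have key : ∀ x : ℝ, ⌊(2 : ℝ) ^ m * x⌋ = ⌊(2 : ℝ) ^ n * x⌋ / ((2 ^ (n - m) : ℕ) : ℤ) := by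
    intro x
    rw [← Int.floor_div_natCast]
    congr 1
    obtain ⟨k, rfl⟩ := Nat.exists_eq_add_of_le h
    rw [Nat.add_sub_cancel_left]
    push_cast
    rw [pow_add]
    field_simp
  simp only [cell, Prod.mk.injEq] at hc ⊢
  rw [key, key, key, key, hc.1, hc.2]
  exact ⟨rfl, rfl⟩

/-- Total weight of a family of dyadic squares; the square `(n, a, b)` (level `n ≥ 0`, index
`(a, b)`) has weight `w n`. Packaging the weights as a measure makes all sums over families
accessible to measure-theoretic lemmas. -/
def cost (w : ℕ → ℝ≥0∞) : Measure (ℕ × ℤ × ℤ) := Measure.count.withDensity fun Q => w Q.1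

/-- The family `S` of dyadic squares covers the set `A`. -/
def Covers (S : Set (ℕ × ℤ × ℤ)) (A : Set E) : Prop := ∀ p ∈ A, ∃ n, (n, cell n p) ∈ S

/-- The dyadic (net) content: the infimum of the total weights of dyadic covers. -/
def content (w : ℕ → ℝ≥0∞) (A : Set E) : ℝ≥0∞ :=
  ⨅ (S : Set (ℕ × ℤ × ℤ)) (_ : Covers S A), cost w S

/-- The maximal squares of a family. -/
def maxl (S : Set (ℕ × ℤ × ℤ)) : Set (ℕ × ℤ × ℤ) :=
  {Q | Q ∈ S ∧ ∀ p, cell Q.1 p = Q.2 → ∀ m < Q.1, (m, cell m p) ∉ S}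

lemma content_le {w : ℕ → ℝ≥0∞} {S : Set (ℕ × ℤ × ℤ)} {A : Set E} (h : Covers S A) :
    content w A ≤ cost w S := iInf₂_le S h

lemma content_mono {w : ℕ → ℝ≥0∞} {A B : Set E} (h : A ⊆ B) : content w A ≤ content w B :=
  le_iInf₂ fun _ hS => content_le fun p hp => hS p (h hp)

lemma cost_singleton (w : ℕ → ℝ≥0∞) (Q : ℕ × ℤ × ℤ) : cost w {Q} = w Q.1 := by
  rw [cost, withDensity_apply _ (MeasurableSet.singleton Q)]
  simp

lemma cost_eq_tsum (w : ℕ → ℝ≥0∞) (S : Set (ℕ × ℤ × ℤ)) : cost w S = ∑' Q : S, w Q.1.1 := by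
  conv_lhs => rw [← biUnion_of_singleton S]
  rw [measure_biUnion (to_countable S) ?_ fun _ _ => .of_discrete]
  · simp [cost_singleton]
  · intro a _ b _ hab
    simpa using hab

lemma exists_cover {w : ℕ → ℝ≥0∞} {A : Set E} {a : ℝ≥0∞} (h : content w A < a) :
    ∃ S, Covers S A ∧ cost w S < a := by
  simpa [content, iInf_lt_iff] using h

lemma Covers.maxl {S : Set (ℕ × ℤ × ℤ)} {A : Set E} (h : Covers S A) : Covers (maxl S) A := by
  classical
  intro p hp
  have hex := h p hp
  refine ⟨Nat.find hex, Nat.find_spec hex, fun p' hp' m hm hmem => ?_⟩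
  rw [cell_coarsen hm.le hp'] at hmem
  exact Nat.find_min hex hm hmem

/-- Given covers of `A` and of `B`, the maximal squares of both cover `A ∪ B`, and the squares
left over, counted with multiplicity, still cover `A ∩ B`. -/
lemma cost_maxl_add_content_le {w : ℕ → ℝ≥0∞} {S T : Set (ℕ × ℤ × ℤ)} {A B : Set E}
    (hS : Covers S A) (hT : Covers T B) :
    cost w (maxl (S ∪ T)) + content w (A ∩ B) ≤ cost w S + cost w T := by
  set U := _root_.maxl (S ∪ T)
  set D := ((S ∪ T) \ U) ∪ (S ∩ T)
  have hD : Covers D (A ∩ B) := by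
    rintro p ⟨hpA, hpB⟩
    obtain ⟨n, hn⟩ := hS p hpA
    obtain ⟨m, hm⟩ := hT p hpB
    rcases lt_trichotomy n m with h | rfl | h
    · exact ⟨m, Or.inl ⟨Or.inr hm, fun hU => hU.2 p rfl n h (Or.inl hn)⟩⟩
    · exact ⟨n, Or.inr ⟨hn, hm⟩⟩
    · exact ⟨n, Or.inl ⟨Or.inl hn, fun hU => hU.2 p rfl m h (Or.inr hm)⟩⟩
  calc cost w U + content w (A ∩ B) ≤ cost w U + cost w D := by gcongr; exact content_le hD
    _ = cost w (U ∪ D) + cost w (U ∩ D) := (measure_union_add_inter _ .of_discrete).symm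
    _ ≤ cost w (S ∪ T) + cost w (S ∩ T) := by
      refine add_le_add (measure_mono ?_) (measure_mono ?_)
      · rintro Q (hQ | hQ | hQ)
        exacts [hQ.1, hQ.1, Or.inl hQ.1]
      · rintro Q ⟨hU, hQ | hQ⟩
        exacts [absurd hU hQ.2, hQ]
    _ = cost w S + cost w T := measure_union_add_inter _ .of_discrete

/-- Strong subadditivity of the dyadic content. -/
lemma content_union_add_inter_le (w : ℕ → ℝ≥0∞) (A B : Set E) :
    content w (A ∪ B) + content w (A ∩ B) ≤ content w A + content w B := by
  refine ENNReal.le_of_forall_pos_le_add fun ε hε hfin => ?_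
  have hε2 : (ε : ℝ≥0∞) / 2 ≠ 0 := by simp [hε.ne']
  obtain ⟨S, hS, hSc⟩ := exists_cover
    (ENNReal.lt_add_right (ENNReal.add_lt_top.1 hfin).1.ne hε2)
  obtain ⟨T, hT, hTc⟩ := exists_cover
    (ENNReal.lt_add_right (ENNReal.add_lt_top.1 hfin).2.ne hε2)
  have hU : Covers (S ∪ T) (A ∪ B) := by
    rintro p (hp | hp)
    · exact (hS p hp).imp fun _ h => Or.inl h
    · exact (hT p hp).imp fun _ h => Or.inr h
  calc content w (A ∪ B) + content w (A ∩ B)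
      ≤ cost w (maxl (S ∪ T)) + content w (A ∩ B) := by gcongr; exact content_le hU.maxl
    _ ≤ cost w S + cost w T := cost_maxl_add_content_le hS hT
    _ ≤ (content w A + ε / 2) + (content w B + ε / 2) := by gcongr
    _ = content w A + content w B + ε := by
      rw [add_add_add_comm, ENNReal.add_halves]

/-- Increasing sets lemma: the dyadic content is continuous along increasing unions of arbitrary
sets. Near-optimal covers of the `A n` are merged one after another, keeping only maximal squares;
by `cost_maxl_add_content_le` each merger costs only the error allowed for the new cover. -/
lemma content_iUnion_le {w : ℕ → ℝ≥0∞} {A : ℕ → Set E} (hA : Monotone A) :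
    content w (⋃ n, A n) ≤ ⨆ n, content w (A n) := by
  refine ENNReal.le_of_forall_pos_le_add fun ε hε hfin => ?_
  have hAfin : ∀ n, content w (A n) ≠ ∞ := fun n => ((le_iSup _ n).trans_lt hfin).ne
  obtain ⟨e, he0, hesum⟩ := ENNReal.exists_pos_sum_of_countable'
    (ε := (ε : ℝ≥0∞)) (by simpa using hε.ne') ℕ
  choose S hS hSc using fun n => exists_cover (ENNReal.lt_add_right (hAfin n) (he0 n).ne')
  -- `C n` is the result of merging the first `n + 1` covers.
  let C : ℕ → Set (ℕ × ℤ × ℤ) := fun n => Nat.rec (S 0) (fun k c => maxl (c ∪ S (k + 1))) n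
  have hC0 : C 0 = S 0 := rfl
  have hCs : ∀ n, C (n + 1) = maxl (C n ∪ S (n + 1)) := fun _ => rfl
  have hCcov : ∀ n, Covers (C n) (A n) := by
    intro n
    cases n with
    | zero => exact hS 0
    | succ k =>
      rw [hCs]
      exact Covers.maxl fun p hp => (hS _ p hp).imp fun _ h => Or.inr h
  have hCcost : ∀ n, cost w (C n) ≤ content w (A n) + ∑ k ∈ Finset.range (n + 1), e k := by
    intro n
    induction n with
    | zero => simpa [hC0] using (hSc 0).le
    | succ n ih =>
      have h1 := cost_maxl_add_content_le (w := w) (hCcov n) (hS (n + 1))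
      rw [inter_eq_left.2 (hA (Nat.le_succ n)), ← hCs] at h1
      have h2 : cost w (C (n + 1)) + content w (A n) ≤
          (content w (A (n + 1)) + ∑ k ∈ Finset.range (n + 1 + 1), e k) + content w (A n) := by
        refine h1.trans ((add_le_add ih (hSc (n + 1)).le).trans_eq ?_)
        rw [Finset.sum_range_succ _ (n + 1)]
        ring
      exact (ENNReal.add_le_add_iff_right (hAfin n)).1 h2
  have hCsub : ∀ n, C n ⊆ ⋃ k, S k := by
    intro n
    induction n with
    | zero => exact subset_iUnion S 0
    | succ n ih =>
      rintro Q ⟨hQ | hQ, -⟩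
      exacts [ih hQ, mem_iUnion.2 ⟨_, hQ⟩]
  set M := maxl (⋃ k, S k)
  have hM : ∀ n, ∀ k ≤ n, M ∩ S k ⊆ C n := by
    intro n
    induction n with
    | zero =>
      rintro k hk Q ⟨-, hQ⟩
      obtain rfl : k = 0 := by omega
      exact hQ
    | succ n ih =>
      rintro k hk Q ⟨hQM, hQ⟩
      rw [hCs]
      refine ⟨?_, fun p hp m hm hmem => hQM.2 p hp m hm ?_⟩
      · rcases Nat.le_succ_iff.1 hk with h | rfl
        exacts [Or.inl (ih k h ⟨hQM, hQ⟩), Or.inr hQ]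
      · rcases hmem with h | h
        exacts [hCsub n h, mem_iUnion.2 ⟨_, h⟩]
  have hMcov : Covers M (⋃ n, A n) := by
    refine Covers.maxl fun p hp => ?_
    obtain ⟨n, hn⟩ := mem_iUnion.1 hp
    exact (hS n p hn).imp fun _ h => mem_iUnion.2 ⟨n, h⟩
  have hMeq : M = ⋃ n, ⋃ k ≤ n, M ∩ S k := by
    ext Q
    simp only [mem_iUnion, mem_inter_iff, exists_prop]
    constructor
    · intro hQ
      obtain ⟨k, hk⟩ := mem_iUnion.1 hQ.1
      exact ⟨k, k, le_rfl, hQ, hk⟩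
    · rintro ⟨_, _, _, hQ, _⟩
      exact hQ
  have hmono : Monotone fun n => ⋃ k ≤ n, M ∩ S k := fun n m hnm =>
    biUnion_mono (fun k (hk : k ≤ n) => (hk.trans hnm : k ≤ m)) fun _ _ => subset_rfl
  calc content w (⋃ n, A n) ≤ cost w M := content_le hMcov
    _ = ⨆ n, cost w (⋃ k ≤ n, M ∩ S k) := by
      rw [← hmono.measure_iUnion, ← hMeq]
    _ ≤ (⨆ n, content w (A n)) + ε := by
      refine iSup_le fun n => ?_
      calc cost w (⋃ k ≤ n, M ∩ S k) ≤ cost w (C n) :=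
            measure_mono (iUnion₂_subset fun k hk => hM n k hk)
        _ ≤ _ := hCcost n
        _ ≤ _ := add_le_add (le_iSup (fun n => content w (A n)) n)
            ((ENNReal.sum_le_tsum _).trans hesum.le)

/-! ### Frostman measures at a finite scale -/

lemma content_empty (w : ℕ → ℝ≥0∞) : content w ∅ = 0 :=
  le_antisymm ((content_le (S := ∅) fun _ h => h.elim).trans_eq measure_empty) zero_le

/-- Edmonds' greedy vertex of the polymatroid of the strongly subadditive set function `content w`:
adding the pieces one at a time and giving each the resulting increment of content, every subfamily
gets at most its content. -/
lemma exists_masses {ι : Type*} [DecidableEq ι] (w : ℕ → ℝ≥0∞) (A : ι → Set E) (T : Finset ι)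
    (hfin : content w (⋃ i ∈ T, A i) ≠ ∞) :
    ∃ m : ι → ℝ≥0∞, ∑ i ∈ T, m i = content w (⋃ i ∈ T, A i) ∧
      ∀ J ⊆ T, ∑ i ∈ J, m i ≤ content w (⋃ i ∈ J, A i) := by
  induction T using Finset.induction_on with
  | empty =>
    refine ⟨0, by simp [content_empty], fun J _ => by simp⟩
  | insert a T ha ih =>
    have hsub : (⋃ i ∈ T, A i) ⊆ ⋃ i ∈ insert a T, A i :=
      biUnion_subset_biUnion_left fun i hi => Finset.mem_insert_of_mem hi
    have hTfin : content w (⋃ i ∈ T, A i) ≠ ∞ := ne_top_of_le_ne_top hfin (content_mono hsub)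
    obtain ⟨m, hm, hmJ⟩ := ih hTfin
    set d := content w (⋃ i ∈ insert a T, A i) - content w (⋃ i ∈ T, A i) with hd
    have hd' : d + content w (⋃ i ∈ T, A i) = content w (⋃ i ∈ insert a T, A i) :=
      tsub_add_cancel_of_le (content_mono hsub)
    have hupd : ∀ J : Finset ι, a ∉ J → ∑ i ∈ J, Function.update m a d i = ∑ i ∈ J, m i :=
      fun J hJ => Finset.sum_congr rfl fun i hi =>
        Function.update_of_ne (fun h : i = a => hJ (h ▸ hi)) _ _
    refine ⟨Function.update m a d, ?_, fun J hJ => ?_⟩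
    · rw [Finset.sum_insert ha, hupd T ha, Function.update_self, hm, hd']
    · by_cases haJ : a ∈ J
      · have hJ0 : J.erase a ⊆ T := fun i hi => by
          have h1 := Finset.mem_erase.1 hi
          exact (Finset.mem_insert.1 (hJ h1.2)).resolve_left h1.1
        rw [← Finset.add_sum_erase J _ haJ, hupd _ (Finset.notMem_erase a J), Function.update_self]
        refine (ENNReal.add_le_add_iff_right hTfin).1 ?_
        calc d + ∑ i ∈ J.erase a, m i + content w (⋃ i ∈ T, A i)
            = content w (⋃ i ∈ insert a T, A i) + ∑ i ∈ J.erase a, m i := by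
              rw [← hd']; ring
          _ ≤ content w ((⋃ i ∈ J, A i) ∪ ⋃ i ∈ T, A i) +
                content w ((⋃ i ∈ J, A i) ∩ ⋃ i ∈ T, A i) := by
              refine add_le_add (content_mono ?_) ((hmJ _ hJ0).trans (content_mono ?_))
              · refine iUnion₂_subset fun i hi => ?_
                rcases Finset.mem_insert.1 hi with rfl | hi
                · exact (subset_biUnion_of_mem (u := A) (show i ∈ (J : Set ι) from haJ)).trans
                    subset_union_left
                · exact (subset_biUnion_of_mem (u := A) (show i ∈ (T : Set ι) from hi)).trans
                    subset_union_right
              · exact subset_inter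
                  (biUnion_subset_biUnion_left fun i hi => Finset.mem_of_mem_erase hi)
                  (biUnion_subset_biUnion_left fun i hi => hJ0 hi)
          _ ≤ _ := content_union_add_inter_le w _ _
      · rw [hupd J haJ]
        exact hmJ J fun i hi =>
          (Finset.mem_insert.1 (hJ hi)).resolve_left fun h => haJ (h ▸ hi)

lemma measurable_cell (n : ℕ) : Measurable (cell n) := by
  unfold cell
  exact (Int.measurable_floor.comp (by fun_prop)).prodMk (Int.measurable_floor.comp (by fun_prop))

lemma abs_coord_sub_le (p x : E) (i : Fin 2) : |p i - x i| ≤ dist p x := by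
  rw [dist_eq_norm]
  exact PiLp.norm_apply_le (p - x) i

lemma abs_floor_sub_floor_le {a b : ℝ} (h : |a - b| ≤ 1) : ⌊b⌋ - 1 ≤ ⌊a⌋ ∧ ⌊a⌋ ≤ ⌊b⌋ + 1 := by
  rw [abs_le] at h
  constructor
  · rw [← Int.floor_sub_one]
    exact Int.floor_le_floor (by linarith)
  · rw [← Int.floor_add_one]
    exact Int.floor_le_floor (by linarith)

/-- The index `c` together with its eight neighbours. -/
def nbrs (c : ℤ × ℤ) : Finset (ℤ × ℤ) :=
  Finset.Icc (c.1 - 1) (c.1 + 1) ×ˢ Finset.Icc (c.2 - 1) (c.2 + 1)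

lemma card_nbrs (c : ℤ × ℤ) : (nbrs c).card = 9 := by
  have h : ∀ z : ℤ, z + 1 + 1 - (z - 1) = 3 := fun z => by ring
  simp [nbrs, h]

lemma cell_mem_nbrs {n : ℕ} {p x : E} (h : dist p x ≤ (1 / 2) ^ n) :
    cell n p ∈ nbrs (cell n x) := by
  have key : ∀ i, |(2 : ℝ) ^ n * p i - 2 ^ n * x i| ≤ 1 := fun i => by
    rw [← mul_sub, abs_mul, abs_of_pos (by positivity : (0 : ℝ) < 2 ^ n)]
    calc (2 : ℝ) ^ n * |p i - x i| ≤ 2 ^ n * (1 / 2) ^ n := by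
          gcongr; exact (abs_coord_sub_le p x i).trans h
      _ = 1 := by rw [← mul_pow]; norm_num
  simp only [nbrs, cell, Finset.mem_product, Finset.mem_Icc]
  exact ⟨abs_floor_sub_floor_le (key 0), abs_floor_sub_floor_le (key 1)⟩

lemma finite_cell_image (n : ℕ) {K : Set E} (hK : Bornology.IsBounded K) :
    (cell n '' K).Finite := by
  obtain ⟨R, hR⟩ := hK.subset_closedBall 0
  refine (((finite_Icc ⌊(2 : ℝ) ^ n * -R⌋ ⌊(2 : ℝ) ^ n * R⌋).prod
    (finite_Icc ⌊(2 : ℝ) ^ n * -R⌋ ⌊(2 : ℝ) ^ n * R⌋))).subset ?_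
  rintro _ ⟨p, hp, rfl⟩
  have key : ∀ i, -R ≤ p i ∧ p i ≤ R := fun i => by
    have h1 := (abs_coord_sub_le p 0 i).trans (hR hp)
    simpa [abs_le] using h1
  refine ⟨⟨?_, ?_⟩, ⟨?_, ?_⟩⟩
  all_goals refine Int.floor_le_floor (mul_le_mul_of_nonneg_left ?_ (by positivity))
  exacts [(key 0).1, (key 0).2, (key 1).1, (key 1).2]

lemma content_ne_top {w : ℕ → ℝ≥0∞} (hw : w 0 ≠ ∞) {K : Set E} (hK : Bornology.IsBounded K) :
    content w K ≠ ∞ := by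
  have hfin := finite_cell_image 0 hK
  have hcov : Covers ((fun c => (0, c)) '' (cell 0 '' K)) K :=
    fun p hp => ⟨0, mem_image_of_mem _ (mem_image_of_mem _ hp)⟩
  refine ne_top_of_le_ne_top ?_ (content_le hcov)
  have hf2 := hfin.image (fun c => ((0 : ℕ), c))
  rw [← biUnion_of_singleton ((fun c => ((0 : ℕ), c)) '' (cell 0 '' K))]
  refine (measure_biUnion_lt_top hf2 ?_).ne
  rintro _ ⟨c, -, rfl⟩
  rw [cost_singleton]
  exact hw.lt_top

/-- Frostman's lemma down to a finite scale: a compact set carries a measure with mass its content,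
giving each dyadic square of level at most `n` no more than its weight. -/
lemma exists_frostman (w : ℕ → ℝ≥0∞) (hw : w 0 ≠ ∞) {K : Set E} (hK : IsCompact K) (n : ℕ) :
    ∃ μ : Measure E, IsFiniteMeasure μ ∧ μ Kᶜ = 0 ∧ μ univ = content w K ∧
      ∀ k ≤ n, ∀ c, μ {p | cell k p = c} ≤ w k := by
  classical
  have hfin := finite_cell_image n hK.isBounded
  set T := hfin.toFinset with hT
  have hx : ∀ c, ∃ x, c ∈ T → x ∈ K ∧ cell n x = c := fun c => by
    by_cases hc : c ∈ T
    · obtain ⟨x, hx⟩ := hfin.mem_toFinset.1 hc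
      exact ⟨x, fun _ => hx⟩
    · exact ⟨0, fun h => absurd h hc⟩
  choose x hx using hx
  let A : ℤ × ℤ → Set E := fun c => {p | p ∈ K ∧ cell n p = c}
  have hA : ⋃ c ∈ T, A c = K := by
    ext p
    simp only [mem_iUnion, exists_prop, A, mem_ofPred_eq]
    constructor
    · rintro ⟨_, _, h, _⟩
      exact h
    · intro h
      exact ⟨cell n p, hfin.mem_toFinset.2 (mem_image_of_mem _ h), h, rfl⟩
  have hKfin := content_ne_top hw hK.isBounded
  obtain ⟨m, hm, hmJ⟩ := exists_masses w A T (by rwa [hA])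
  rw [hA] at hm
  let μ : Measure E := ∑ c ∈ T, m c • Measure.dirac (x c)
  have hμ : ∀ s, MeasurableSet s → μ s = ∑ c ∈ T with x c ∈ s, m c := fun s hs => by
    simp only [μ, Measure.finsetSum_apply, Measure.smul_apply, Measure.dirac_apply' _ hs,
      smul_eq_mul, Finset.sum_filter]
    refine Finset.sum_congr rfl fun c _ => ?_
    by_cases h : x c ∈ s <;> simp [h]
  have hμu : μ univ = content w K := by
    rw [hμ _ MeasurableSet.univ]
    simpa using hm
  refine ⟨μ, ⟨by rw [hμu]; exact hKfin.lt_top⟩, ?_, hμu, fun k hk d => ?_⟩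
  · rw [hμ _ hK.measurableSet.compl]
    refine Finset.sum_eq_zero fun c hc => ?_
    simp only [Finset.mem_filter] at hc
    exact absurd (hx c hc.1).1 hc.2
  · refine (hμ _ (measurable_cell k (MeasurableSet.singleton d))).trans_le ?_
    refine (hmJ _ (Finset.filter_subset _ _)).trans ?_
    rw [← show cost w {(k, d)} = w k from cost_singleton w _]
    refine content_le fun p hp => ⟨k, ?_⟩
    simp only [mem_iUnion, exists_prop] at hp
    obtain ⟨c, hc, -, hpc⟩ := hp
    simp only [Finset.mem_filter] at hc
    rw [cell_coarsen hk (hpc.trans (hx c hc.1).2.symm)]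
    exact congrArg (fun z => (k, z) ∈ ({(k, d)} : Set (ℕ × ℤ × ℤ))) hc.2 |>.mpr rfl

lemma measure_closedBall_le {w : ℕ → ℝ≥0∞} {μ : Measure E} {k : ℕ}
    (h : ∀ c, μ {p | cell k p = c} ≤ w k) (x : E) :
    μ (closedBall x ((1 / 2) ^ k)) ≤ 9 * w k := by
  calc μ (closedBall x ((1 / 2) ^ k)) ≤ μ (⋃ c ∈ nbrs (cell k x), {p | cell k p = c}) :=
        measure_mono fun p hp => by
          simp only [mem_iUnion, exists_prop]
          exact ⟨_, cell_mem_nbrs hp, rfl⟩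
    _ ≤ ∑ c ∈ nbrs (cell k x), μ {p | cell k p = c} := measure_biUnion_finset_le _ _
    _ ≤ ∑ c ∈ nbrs (cell k x), w k := Finset.sum_le_sum fun c _ => h c
    _ = 9 * w k := by rw [Finset.sum_const, card_nbrs, nsmul_eq_mul]; norm_num

/-! ### Content and Hausdorff measure -/

/-- The weight of a square of side `2⁻ⁿ` in dimension `s`. -/
def wt (s : ℝ) (n : ℕ) : ℝ≥0∞ := ((2⁻¹ : ℝ≥0∞) ^ n) ^ s

lemma ediam_cell_le (Q : ℕ × ℤ × ℤ) :
    ediam {p : E | cell Q.1 p = Q.2} ≤ 2 * (2⁻¹ : ℝ≥0∞) ^ Q.1 := by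
  obtain ⟨n, c⟩ := Q
  refine ediam_le fun p hp p' hp' => ?_
  have hpp : cell n p = cell n p' := Eq.trans hp (Eq.symm hp')
  simp only [cell, Prod.mk.injEq] at hpp
  have key : ∀ i, ⌊(2 : ℝ) ^ n * p i⌋ = ⌊(2 : ℝ) ^ n * p' i⌋ → |p i - p' i| ≤ (1 / 2) ^ n := by
    intro i hi
    have h1 := (Int.abs_sub_lt_one_of_floor_eq_floor hi).le
    rw [← mul_sub, abs_mul, abs_of_pos (by positivity : (0 : ℝ) < 2 ^ n)] at h1
    rw [one_div, inv_pow, ← one_div, le_div_iff₀' (by positivity)]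
    exact h1
  have h0 := key 0 hpp.1
  have h1 := key 1 hpp.2
  have hd : dist p p' ≤ 2 * (1 / 2) ^ n := by
    rw [EuclideanSpace.dist_eq, Fin.sum_univ_two]
    refine Real.sqrt_le_iff.2 ⟨by positivity, ?_⟩
    rw [Real.dist_eq, Real.dist_eq]
    have := abs_nonneg (p 0 - p' 0)
    have := abs_nonneg (p 1 - p' 1)
    nlinarith
  rw [edist_dist]
  refine (ENNReal.ofReal_le_ofReal hd).trans_eq ?_
  rw [ENNReal.ofReal_mul (by norm_num), ENNReal.ofReal_pow (by norm_num), one_div,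
    ENNReal.ofReal_inv_of_pos (by norm_num)]
  norm_num

/-- Sets of zero content are null for the Hausdorff measure: in a cover of small total weight,
every square is small. -/
lemma hausdorffMeasure_eq_zero {s : ℝ} (hs : 0 < s) {A : Set E} (h : content (wt s) A = 0) :
    μH[s] A = 0 := by
  let e : ℕ → ℝ≥0∞ := fun j => 2⁻¹ ^ j
  have he : Filter.Tendsto e Filter.atTop (nhds 0) :=
    ENNReal.tendsto_pow_atTop_nhds_zero_of_lt_one (by norm_num)
  have he0 : ∀ j, 0 < e j := fun j => ENNReal.pow_pos (by norm_num) j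
  choose S hS hSc using fun j => exists_cover (h.trans_lt (he0 j))
  have hlim : ∀ (C : ℝ≥0∞) (t : ℝ), C ≠ ∞ → 0 < t →
      Filter.Tendsto (fun j => C * e j ^ t) Filter.atTop (nhds 0) := fun C t hC ht => by
    have h1 := ENNReal.Tendsto.const_mul (a := C)
      ((ENNReal.continuous_rpow_const (y := t)).continuousAt.tendsto.comp he) (Or.inr hC)
    simpa [ENNReal.zero_rpow_of_pos ht] using h1
  have hle : ∀ j (Q : S j), wt s Q.1.1 ≤ e j := fun j Q => by
    rw [← cost_singleton (wt s) Q.1]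
    exact (measure_mono (singleton_subset_iff.2 Q.2)).trans (hSc j).le
  refine le_antisymm ((Measure.hausdorffMeasure_le_liminf_tsum (l := Filter.atTop) s A
    (fun j => 2 * e j ^ (1 / s)) (hlim 2 _ (by norm_num) (by positivity))
    (fun j (Q : S j) => {p : E | cell Q.1.1 p = Q.1.2}) ?_ ?_).trans ?_) zero_le
  · refine Filter.Eventually.of_forall fun j Q => (ediam_cell_le Q.1).trans ?_
    gcongr
    rw [one_div]
    refine (ENNReal.le_rpow_inv_iff hs).2 ?_
    exact hle j Q
  · refine Filter.Eventually.of_forall fun j p hp => ?_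
    obtain ⟨n, hn⟩ := hS j p hp
    exact mem_iUnion.2 ⟨⟨_, hn⟩, rfl⟩
  · rw [← (hlim (2 ^ s) 1 (by simp) one_pos).liminf_eq]
    refine Filter.liminf_le_liminf (Filter.Eventually.of_forall fun j => ?_)
    calc ∑' Q : S j, ediam {p : E | cell Q.1.1 p = Q.1.2} ^ s
        ≤ ∑' Q : S j, 2 ^ s * wt s Q.1.1 := by
          refine ENNReal.tsum_le_tsum fun Q => ?_
          rw [wt, ← ENNReal.mul_rpow_of_nonneg _ _ hs.le]
          exact ENNReal.rpow_le_rpow (ediam_cell_le Q.1) hs.le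
      _ = 2 ^ s * cost (wt s) (S j) := by rw [ENNReal.tsum_mul_left, cost_eq_tsum]
      _ ≤ 2 ^ s * e j ^ (1 : ℝ) := by
          rw [ENNReal.rpow_one]
          gcongr
          exact (hSc j).le

/-! ### Capacitability of Borel sets -/

lemma isCompact_box (b : ℕ → ℕ) : IsCompact {x : ℕ → ℕ | ∀ i, x i ≤ b i} := by
  have h := isCompact_univ_pi fun i => (finite_Iic (b i)).isCompact
  simpa [Set.pi] using h

/-- An open set containing the compact box `∏ i, {0, …, b i}` of Baire space contains one of the
sets obtained by restricting only finitely many coordinates. -/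
lemma exists_subset_of_isOpen (b : ℕ → ℕ) {V : Set (ℕ → ℕ)} (hV : IsOpen V)
    (hb : {x | ∀ i, x i ≤ b i} ⊆ V) : ∃ k, {x : ℕ → ℕ | ∀ i < k, x i ≤ b i} ⊆ V := by
  by_contra! hcon
  choose x hx hxV using fun k => not_subset.1 (hcon k)
  -- Truncate the bad points to the box and extract a convergent subsequence.
  obtain ⟨y, hy, φ, hφ, hlim⟩ := (isCompact_box b).tendsto_subseq (x := fun k i => min (x k i) (b i))
    fun k i => min_le_right _ _
  have hlim' : Filter.Tendsto (fun k => x (φ k)) Filter.atTop (nhds y) := by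
    rw [tendsto_pi_nhds] at hlim ⊢
    intro i
    refine (hlim i).congr' ?_
    filter_upwards [Filter.eventually_gt_atTop i] with k hk
    exact min_eq_left (hx (φ k) i (hk.trans_le (hφ.id_le k)))
  obtain ⟨k, hk⟩ := (hlim'.eventually (hV.mem_nhds (hb hy))).exists
  exact hxV (φ k) hk

/-- Every cover `S` covers a neighbourhood of the given set after adding to each square its
neighbours, which multiplies the total weight by at most nine. -/
lemma exists_open_content_le (w : ℕ → ℝ≥0∞) {S : Set (ℕ × ℤ × ℤ)} {C : Set E}
    (hS : Covers S C) : ∃ U, IsOpen U ∧ C ⊆ U ∧ content w U ≤ 9 * cost w S := by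
  let N : Set (ℕ × ℤ × ℤ) := ⋃ Q ∈ S, ⋃ c ∈ nbrs Q.2, {(Q.1, c)}
  refine ⟨⋃ x : E, ⋃ n ∈ {n | (n, cell n x) ∈ S}, ball x ((1 / 2) ^ n),
    isOpen_iUnion fun x => isOpen_biUnion fun n _ => isOpen_ball, fun p hp => ?_, ?_⟩
  · obtain ⟨n, hn⟩ := hS p hp
    exact mem_iUnion.2 ⟨p, mem_biUnion hn (mem_ball_self (by positivity))⟩
  · have hN : Covers N (⋃ x : E, ⋃ n ∈ {n | (n, cell n x) ∈ S}, ball x ((1 / 2) ^ n)) := by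
      intro p hp
      simp only [mem_iUnion, exists_prop] at hp
      obtain ⟨x, n, hn, hpx⟩ := hp
      refine ⟨n, mem_biUnion hn ?_⟩
      exact mem_biUnion (show cell n p ∈ (nbrs (cell n x) : Set (ℤ × ℤ)) from
        cell_mem_nbrs (le_of_lt hpx)) rfl
    refine (content_le hN).trans ?_
    calc cost w N ≤ ∑' Q : S, cost w (⋃ c ∈ nbrs Q.1.2, {(Q.1.1, c)}) :=
          measure_biUnion_le _ (to_countable S) _
      _ ≤ ∑' Q : S, 9 * w Q.1.1 := by
          refine ENNReal.tsum_le_tsum fun Q => (measure_biUnion_finset_le _ _).trans ?_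
          simp [cost_singleton, card_nbrs]
      _ = 9 * cost w S := by rw [ENNReal.tsum_mul_left, cost_eq_tsum]

/-- Capacitability: a Borel set of positive content contains a compact set of positive content.
Writing the Borel set as a continuous image of Baire space, the increasing sets lemma allows
bounding the coordinates one at a time without losing content. -/
lemma exists_compact_content_pos (w : ℕ → ℝ≥0∞) {K : Set E} (hK : MeasurableSet K)
    (h : 0 < content w K) : ∃ C ⊆ K, IsCompact C ∧ 0 < content w C := by
  have han := hK.analyticSet
  rw [AnalyticSet] at han
  rcases han with rfl | ⟨f, hf, rfl⟩
  · exact absurd h (by simp [content_empty])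
  obtain ⟨a, ha0, ha⟩ := exists_between h
  -- Bounding the `k`-th coordinate by a large `m` keeps the content above `a`.
  have step : ∀ (k : ℕ) (B : Set (ℕ → ℕ)), a < content w (f '' B) →
      ∃ m : ℕ, a < content w (f '' (B ∩ {x | x k ≤ m})) := by
    intro k B hB
    have hmono : Monotone fun m : ℕ => f '' (B ∩ {x | x k ≤ m}) := fun m m' hm =>
      image_mono (inter_subset_inter_right _ fun x (hx : x k ≤ m) => hx.trans hm)
    have hU : f '' B = ⋃ m : ℕ, f '' (B ∩ {x | x k ≤ m}) := by
      rw [← image_iUnion, ← inter_iUnion]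
      congr 1
      refine (inter_eq_left.2 fun x _ => mem_iUnion.2 ⟨x k, le_refl (x k)⟩).symm
    rw [hU] at hB
    exact lt_iSup_iff.1 (hB.trans_le (content_iUnion_le hmono))
  choose! g hg using step
  let B : ℕ → Set (ℕ → ℕ) := fun n => Nat.rec univ (fun k D => D ∩ {x | x k ≤ g k D}) n
  have hBs : ∀ k, B (k + 1) = B k ∩ {x | x k ≤ g k (B k)} := fun _ => rfl
  have hBa : ∀ k, a < content w (f '' B k) := by
    intro k
    induction k with
    | zero => simpa [B] using ha
    | succ k ih => exact hg k (B k) ih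
  have hBeq : ∀ k, B k = {x | ∀ i < k, x i ≤ g i (B i)} := by
    intro k
    induction k with
    | zero => simp [B]
    | succ k ih =>
      rw [hBs]
      nth_rewrite 1 [ih]
      ext x
      simp only [mem_inter_iff, mem_ofPred_eq, Nat.lt_succ_iff_lt_or_eq]
      constructor
      · rintro ⟨h1, h2⟩ i (hi | rfl)
        exacts [h1 i hi, h2]
      · exact fun h => ⟨fun i hi => h i (Or.inl hi), h k (Or.inr rfl)⟩
  refine ⟨_, image_subset_range f _, (isCompact_box fun i => g i (B i)).image hf, ?_⟩
  by_contra! hzero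
  obtain ⟨S, hS, hSc⟩ := exists_cover (w := w) (hzero.trans_lt (ENNReal.div_pos ha0.ne'
    (by norm_num : (9 : ℝ≥0∞) ≠ ∞)))
  obtain ⟨U, hUo, hCU, hUc⟩ := exists_open_content_le w hS
  obtain ⟨k, hk⟩ := exists_subset_of_isOpen _ (hUo.preimage hf) (image_subset_iff.1 hCU)
  rw [← hBeq] at hk
  refine lt_irrefl a ((hBa k).trans_le ?_)
  calc content w (f '' B k) ≤ content w U := content_mono (image_subset_iff.2 hk)
    _ ≤ 9 * cost w S := hUc
    _ ≤ 9 * (a / 9) := by gcongr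
    _ = a := ENNReal.mul_div_cancel (by norm_num) (by norm_num)

/-! ### Energy and projections -/

/-- For fixed `z ≠ 0`, the projection of `z` is at most `δ` in absolute value only for angles close
to a direction orthogonal to `z`. -/
lemma volume_angle_le {z : E} (hz : z ≠ 0) {δ : ℝ} (hδ : 0 ≤ δ) :
    (volume.restrict (Icc (-(π / 2)) (π / 2))) {θ | |proj θ z| ≤ δ} ≤
      ENNReal.ofReal (4 * π * δ / ‖z‖) := by
  have hn : 0 < ‖z‖ := norm_pos_iff.2 hz
  set φ := Complex.arg ⟨z 0, z 1⟩
  have hnorm : ‖(⟨z 0, z 1⟩ : ℂ)‖ = ‖z‖ := by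
    rw [EuclideanSpace.norm_eq, Fin.sum_univ_two, Complex.norm_def, Complex.normSq_mk]
    simp [sq]
  have h0 : z 0 = ‖z‖ * cos φ := by rw [← hnorm, Complex.norm_mul_cos_arg]
  have h1 : z 1 = ‖z‖ * sin φ := by rw [← hnorm, Complex.norm_mul_sin_arg]
  have hproj : ∀ θ, proj θ z = ‖z‖ * cos (θ - φ) := fun θ => by
    rw [proj, h0, h1, cos_sub]; ring
  have hφ1 : -π < φ := Complex.neg_pi_lt_arg _
  have hφ2 : φ ≤ π := Complex.arg_le_pi _
  have hpi := Real.pi_pos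
  set ρ := π / 2 * (δ / ‖z‖) with hρ
  have hρ0 : 0 ≤ ρ := by positivity
  -- Near a zero `c` of the cosine, `|cos u| ≥ (2 / π) |u - c|`.
  have near : ∀ θ c : ℝ, |proj θ z| ≤ δ → |cos (θ - φ)| = |sin (θ - φ - c)| →
      |θ - φ - c| ≤ π / 2 → θ ∈ closedBall (φ + c) ρ := by
    intro θ c hθ hc habs
    rw [hproj, abs_mul, abs_of_pos hn, hc] at hθ
    have h2 := Real.mul_abs_le_abs_sin habs
    rw [mem_closedBall, Real.dist_eq, show θ - (φ + c) = θ - φ - c by ring, hρ]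
    have h3 : |sin (θ - φ - c)| ≤ δ / ‖z‖ := by
      rw [le_div_iff₀ hn, mul_comm]; exact hθ
    calc |θ - φ - c| = π / 2 * (2 / π * |θ - φ - c|) := by field_simp
      _ ≤ π / 2 * (δ / ‖z‖) := by gcongr; exact h2.trans h3
  have hsub : {θ | |proj θ z| ≤ δ} ∩ Icc (-(π / 2)) (π / 2) ⊆
      (closedBall (φ + -(3 * π / 2)) ρ ∪ closedBall (φ + -(π / 2)) ρ) ∪
      (closedBall (φ + π / 2) ρ ∪ closedBall (φ + 3 * π / 2) ρ) := by
    rintro θ ⟨hθ, hθ1, hθ2⟩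
    have hθ' : |proj θ z| ≤ δ := hθ
    rcases le_total (θ - φ) (-π) with ha | ha
    · refine Or.inl (Or.inl (near θ _ hθ' ?_ (abs_le.2 ⟨by linarith, by linarith⟩)))
      rw [show θ - φ - -(3 * π / 2) = (θ - φ - π / 2) + 2 * π by ring, sin_add_two_pi,
        sin_sub_pi_div_two, abs_neg]
    rcases le_total (θ - φ) 0 with hb | hb
    · refine Or.inl (Or.inr (near θ _ hθ' ?_ (abs_le.2 ⟨by linarith, by linarith⟩)))
      rw [sub_neg_eq_add, sin_add_pi_div_two]
    rcases le_total (θ - φ) π with hc | hc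
    · refine Or.inr (Or.inl (near θ _ hθ' ?_ (abs_le.2 ⟨by linarith, by linarith⟩)))
      rw [sin_sub_pi_div_two, abs_neg]
    · refine Or.inr (Or.inr (near θ _ hθ' ?_ (abs_le.2 ⟨by linarith, by linarith⟩)))
      rw [show θ - φ - 3 * π / 2 = (θ - φ + π / 2) - 2 * π by ring, sin_sub_two_pi,
        sin_add_pi_div_two]
  rw [Measure.restrict_apply' measurableSet_Icc]
  calc volume ({θ | |proj θ z| ≤ δ} ∩ Icc (-(π / 2)) (π / 2))
      ≤ (ENNReal.ofReal (2 * ρ) + ENNReal.ofReal (2 * ρ)) +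
        (ENNReal.ofReal (2 * ρ) + ENNReal.ofReal (2 * ρ)) := by
        refine (measure_mono hsub).trans ((measure_union_le _ _).trans (add_le_add ?_ ?_)) <;>
        · refine (measure_union_le _ _).trans_eq ?_
          rw [Real.volume_closedBall, Real.volume_closedBall]
    _ = ENNReal.ofReal (4 * π * δ / ‖z‖) := by
        rw [← ENNReal.ofReal_add (by positivity) (by positivity),
          ← ENNReal.ofReal_add (by positivity) (by positivity)]
        congr 1
        rw [hρ]; ring

/-- A dyadic majorant of the truncated Riesz kernel `min (2ⁿ) (1 / |x - y|)`, up to constants. -/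
lemma kernel_le (n : ℕ) (x y : E) :
    (2 : ℝ≥0∞) ^ n * (volume.restrict (Icc (-(π / 2)) (π / 2)))
      {θ | |proj θ (x - y)| ≤ 2 * (1 / 2) ^ n} ≤
    ENNReal.ofReal (8 * π) * (1 + ∑ k ∈ Finset.range (n + 1),
      2 ^ (k + 1) * (closedBall x ((1 / 2) ^ k)).indicator 1 y) := by
  have hpi := Real.pi_pos
  have h2 : ∀ k : ℕ, (2 : ℝ≥0∞) ^ k = ENNReal.ofReal (2 ^ k) := fun k => by
    rw [ENNReal.ofReal_pow (by norm_num)]; norm_num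
  -- The general bound by `8π / |x - y|`.
  have hmain : ∀ c : ℝ, 0 < c → c ≤ ‖x - y‖ →
      (2 : ℝ≥0∞) ^ n * (volume.restrict (Icc (-(π / 2)) (π / 2)))
      {θ | |proj θ (x - y)| ≤ 2 * (1 / 2) ^ n} ≤ ENNReal.ofReal (8 * π) * ENNReal.ofReal (1 / c) := by
    intro c hc hcx
    have hz : x - y ≠ 0 := norm_pos_iff.1 (hc.trans_le hcx)
    refine (mul_le_mul_right (volume_angle_le hz (by positivity)) _).trans ?_
    rw [h2, ← ENNReal.ofReal_mul (by positivity), ← ENNReal.ofReal_mul (by positivity)]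
    refine ENNReal.ofReal_le_ofReal ?_
    calc (2 : ℝ) ^ n * (4 * π * (2 * (1 / 2) ^ n) / ‖x - y‖)
        = (2 ^ n * (1 / 2) ^ n) * (8 * π * (1 / ‖x - y‖)) := by ring
      _ = 8 * π * (1 / ‖x - y‖) := by rw [← mul_pow]; norm_num
      _ ≤ 8 * π * (1 / c) := by gcongr
  have hterm : ∀ k ≤ n, y ∈ closedBall x ((1 / 2) ^ k) → (2 : ℝ≥0∞) ^ (k + 1) ≤
      1 + ∑ k ∈ Finset.range (n + 1),
        2 ^ (k + 1) * (closedBall x ((1 / 2) ^ k)).indicator 1 y := by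
    intro k hk hy
    refine le_add_of_nonneg_of_le zero_le ?_
    refine le_trans ?_ (Finset.single_le_sum (fun _ _ => zero_le)
      (Finset.mem_range.2 (Nat.lt_succ_of_le hk)))
    rw [indicator_of_mem hy, Pi.one_apply, mul_one]
  by_cases hy0 : y ∈ closedBall x ((1 / 2) ^ 0)
  · classical
    -- The finest of the balls containing `y`.
    set k := Nat.findGreatest (fun k => y ∈ closedBall x ((1 / 2) ^ k)) n with hk
    have hkn : k ≤ n := Nat.findGreatest_le n
    have hky : y ∈ closedBall x ((1 / 2) ^ k) :=
      Nat.findGreatest_spec (P := fun k => y ∈ closedBall x ((1 / 2) ^ k)) (Nat.zero_le n) hy0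
    refine le_trans ?_ (mul_le_mul_right (hterm k hkn hky) _)
    rcases hkn.lt_or_eq with hlt | heq
    · have hnot := Nat.findGreatest_is_greatest (Nat.lt_succ_self k) (Nat.succ_le_of_lt hlt)
      have hfar : (1 / 2 : ℝ) ^ (k + 1) ≤ ‖x - y‖ := by
        rw [mem_closedBall, not_le, dist_comm, dist_eq_norm] at hnot
        exact hnot.le
      refine (hmain _ (by positivity) hfar).trans_eq ?_
      rw [h2]
      congr 2
      rw [one_div_pow, one_div_one_div]
    · rw [heq, pow_succ, mul_comm (ENNReal.ofReal _), mul_assoc]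
      gcongr
      calc (volume.restrict (Icc (-(π / 2)) (π / 2))) {θ | |proj θ (x - y)| ≤ 2 * (1 / 2) ^ n}
          ≤ (volume.restrict (Icc (-(π / 2)) (π / 2))) univ := measure_mono (subset_univ _)
        _ = ENNReal.ofReal π := by
            rw [Measure.restrict_apply_univ, Real.volume_Icc]; congr 1; ring
        _ ≤ 1 * ENNReal.ofReal (8 * π) := by
            rw [one_mul]; exact ENNReal.ofReal_le_ofReal (by linarith)
        _ ≤ 2 * ENNReal.ofReal (8 * π) := by gcongr; norm_num
  · have hfar : (1 : ℝ) ≤ ‖x - y‖ := by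
      rw [mem_closedBall, not_le, dist_comm, dist_eq_norm, pow_zero] at hy0
      exact hy0.le
    refine (hmain 1 one_pos hfar).trans ?_
    gcongr
    simp

/-- The pairs of points whose projections in direction `θ` are within `2 · 2⁻ⁿ` of each other. -/
def nearPairs (n : ℕ) : Set (ℝ × E × E) :=
  {q | |proj q.1 (q.2.1 - q.2.2)| ≤ 2 * (1 / 2) ^ n}

lemma measurableSet_nearPairs (n : ℕ) : MeasurableSet (nearPairs n) := by
  refine measurableSet_le ?_ measurable_const
  unfold proj
  fun_prop

/-- Averaged over all directions, the normalised mass of pairs with nearby projections is controlled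
by the energy of the measure, hence by its masses on small balls. -/
lemma lintegral_nearPairs_le {w : ℕ → ℝ≥0∞} {μ : Measure E} [IsFiniteMeasure μ] {n : ℕ}
    (h : ∀ k ≤ n, ∀ c, μ {p | cell k p = c} ≤ w k) :
    ∫⁻ θ in Icc (-(π / 2)) (π / 2), 2 ^ n * (μ.prod μ) (Prod.mk θ ⁻¹' nearPairs n) ≤
      ENNReal.ofReal (8 * π) * (μ univ + ∑' k, 2 ^ (k + 1) * (9 * w k)) * μ univ := by
  rw [lintegral_const_mul _ (measurable_measure_prodMk_left (measurableSet_nearPairs n)),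
    ← Measure.prod_apply (measurableSet_nearPairs n),
    Measure.prod_apply_symm (measurableSet_nearPairs n)]
  have hmeas : Measurable fun z : E × E => (volume.restrict (Icc (-(π / 2)) (π / 2)))
      ((fun θ => (θ, z)) ⁻¹' nearPairs n) :=
    measurable_measure_prodMk_right (measurableSet_nearPairs n)
  rw [← lintegral_const_mul _ hmeas, lintegral_prod _ (hmeas.const_mul _).aemeasurable,
    ← lintegral_const]
  refine lintegral_mono fun x => ?_
  calc ∫⁻ y, 2 ^ n * (volume.restrict (Icc (-(π / 2)) (π / 2)))
        ((fun θ => (θ, (x, y))) ⁻¹' nearPairs n) ∂μ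
      ≤ ∫⁻ y, ENNReal.ofReal (8 * π) * (1 + ∑ k ∈ Finset.range (n + 1),
          2 ^ (k + 1) * (closedBall x ((1 / 2) ^ k)).indicator 1 y) ∂μ :=
        lintegral_mono fun y => kernel_le n x y
    _ = ENNReal.ofReal (8 * π) * (μ univ + ∑ k ∈ Finset.range (n + 1),
          2 ^ (k + 1) * μ (closedBall x ((1 / 2) ^ k))) := by
        have hm : ∀ k : ℕ, Measurable fun y : E =>
            (closedBall x ((1 / 2) ^ k)).indicator (1 : E → ℝ≥0∞) y := fun k =>
          measurable_one.indicator measurableSet_closedBall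
        have hsum : Measurable fun y : E => ∑ k ∈ Finset.range (n + 1),
            2 ^ (k + 1) * (closedBall x ((1 / 2) ^ k)).indicator (1 : E → ℝ≥0∞) y :=
          Finset.measurable_fun_sum _ fun k _ => (hm k).const_mul _
        rw [lintegral_const_mul _ (hsum.const_add 1),
          lintegral_add_left measurable_const, lintegral_one,
          lintegral_finsetSum _ fun k _ => (hm k).const_mul _]
        congr 2
        refine Finset.sum_congr rfl fun k _ => ?_
        rw [lintegral_const_mul _ (hm k), lintegral_indicator_one measurableSet_closedBall]
    _ ≤ ENNReal.ofReal (8 * π) * (μ univ + ∑ k ∈ Finset.range (n + 1),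
          2 ^ (k + 1) * (9 * w k)) := by
        gcongr with k hk
        exact measure_closedBall_le (h k (Nat.lt_succ_iff.1 (Finset.mem_range.1 hk))) x
    _ ≤ _ := by
        gcongr
        exact ENNReal.sum_le_tsum _

/-- The energy series converges in every dimension `s > 1`. -/
lemma tsum_wt_ne_top {s : ℝ} (hs : 1 < s) : ∑' k, 2 ^ (k + 1) * (9 * wt s k) ≠ ∞ := by
  have hterm : ∀ k, (2 : ℝ≥0∞) ^ (k + 1) * (9 * wt s k) = 18 * (2 * 2⁻¹ ^ s) ^ k := fun k => by
    rw [wt, mul_pow, ← ENNReal.rpow_natCast (2⁻¹ ^ s), ← ENNReal.rpow_natCast 2⁻¹,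
      ← ENNReal.rpow_mul, ← ENNReal.rpow_mul, mul_comm s, pow_succ]
    ring
  simp_rw [hterm]
  rw [ENNReal.tsum_mul_left, ENNReal.tsum_geometric]
  refine ENNReal.mul_ne_top (by norm_num) (ENNReal.inv_ne_top.2 (tsub_pos_iff_lt.2 ?_).ne')
  calc (2 : ℝ≥0∞) * 2⁻¹ ^ s < 2 * 2⁻¹ ^ (1 : ℝ) := by
        refine ENNReal.mul_lt_mul_right (by norm_num) (by norm_num) ?_
        exact ENNReal.rpow_lt_rpow_of_exponent_gt (by norm_num) (by norm_num) hs
    _ = 1 := by rw [ENNReal.rpow_one]; exact ENNReal.mul_inv_cancel (by norm_num) (by norm_num)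

/-- By the Cauchy–Schwarz inequality, if the image of `C` under `g` has a small neighbourhood then
many pairs of points of `C` have images close to each other. -/
lemma sq_mass_le {μ : Measure E} [IsFiniteMeasure μ] {C : Set E} (hC : μ Cᶜ = 0) {g : E → ℝ}
    (hg : Measurable g) {r : ℝ} (hr : 0 < r) :
    ENNReal.ofReal (2 * r) * μ univ ^ 2 ≤
      volume (cthickening r (g '' C)) * (μ.prod μ) {z | |g z.1 - g z.2| ≤ 2 * r} := by
  set P := cthickening r (g '' C)
  have hP : MeasurableSet P := isClosed_cthickening.measurableSet
  let N : Set (ℝ × E) := {q | |g q.2 - q.1| ≤ r}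
  have hN : MeasurableSet N := measurableSet_le (by fun_prop) measurable_const
  let f : ℝ → ℝ≥0∞ := fun t => μ (Prod.mk t ⁻¹' N)
  have hf : Measurable f := measurable_measure_prodMk_left hN
  have hball : ∀ x, (fun t => (t, x)) ⁻¹' N = closedBall (g x) r := fun x => by
    ext t
    simp [N, Real.dist_eq, abs_sub_comm]
  have hint : ∫⁻ t in P, f t = ENNReal.ofReal (2 * r) * μ univ := by
    rw [← Measure.prod_apply hN, Measure.prod_apply_symm hN, ← lintegral_const]
    refine lintegral_congr_ae ?_
    have hmem : ∀ᵐ x ∂μ, x ∈ C := hC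
    filter_upwards [hmem] with x hx
    rw [hball, Measure.restrict_apply' hP, inter_eq_left.2, Real.volume_closedBall]
    exact closedBall_subset_cthickening (mem_image_of_mem g hx) r
  have hsq : ∫⁻ t in P, f t ^ (2 : ℝ) ≤
      ENNReal.ofReal (2 * r) * (μ.prod μ) {z | |g z.1 - g z.2| ≤ 2 * r} := by
    let N2 : Set (ℝ × E × E) := {q | |g q.2.1 - q.1| ≤ r ∧ |g q.2.2 - q.1| ≤ r}
    have hN2 : MeasurableSet N2 :=
      MeasurableSet.inter (s₁ := {q : ℝ × E × E | |g q.2.1 - q.1| ≤ r})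
        (s₂ := {q : ℝ × E × E | |g q.2.2 - q.1| ≤ r})
        (measurableSet_le (by fun_prop) measurable_const)
        (measurableSet_le (by fun_prop) measurable_const)
    have hG : MeasurableSet {z : E × E | |g z.1 - g z.2| ≤ 2 * r} :=
      measurableSet_le (by fun_prop) measurable_const
    calc ∫⁻ t in P, f t ^ (2 : ℝ) ≤ ∫⁻ t, f t ^ (2 : ℝ) := setLIntegral_le_lintegral _ _
      _ = ∫⁻ t, (μ.prod μ) (Prod.mk t ⁻¹' N2) := by
          refine lintegral_congr fun t => ?_
          rw [ENNReal.rpow_two, sq, ← Measure.prod_prod]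
          rfl
      _ = ∫⁻ z, volume ((fun t => (t, z)) ⁻¹' N2) ∂(μ.prod μ) := by
          rw [← Measure.prod_apply hN2, Measure.prod_apply_symm hN2]
      _ ≤ ∫⁻ z, {z : E × E | |g z.1 - g z.2| ≤ 2 * r}.indicator
            (fun _ => ENNReal.ofReal (2 * r)) z ∂(μ.prod μ) := by
          refine lintegral_mono fun z => ?_
          by_cases hz : |g z.1 - g z.2| ≤ 2 * r
          · rw [indicator_of_mem (show z ∈ {z : E × E | |g z.1 - g z.2| ≤ 2 * r} from hz),
              ← Real.volume_closedBall (g z.1), ← hball]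
            exact measure_mono fun t ht => ht.1
          · have hempty : (fun t => (t, z)) ⁻¹' N2 = ∅ := by
              refine eq_empty_of_forall_notMem fun t ht => hz ?_
              have h1 : |g z.1 - t| ≤ r := ht.1
              have h2 : |g z.2 - t| ≤ r := ht.2
              rw [abs_le] at h1 h2 ⊢
              constructor <;> linarith
            rw [hempty, measure_empty]
            exact zero_le
      _ = _ := by rw [lintegral_indicator_const hG]
  have hcs := ENNReal.lintegral_mul_le_Lp_mul_Lq (volume.restrict P) Real.HolderConjugate.two_two
    hf.aemeasurable (measurable_const (a := (1 : ℝ≥0∞))).aemeasurable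
  simp only [Pi.mul_apply, mul_one, ENNReal.one_rpow, lintegral_one,
    Measure.restrict_apply_univ] at hcs
  rw [hint, ← ENNReal.mul_rpow_of_nonneg _ _ (by norm_num), one_div,
    ENNReal.le_rpow_inv_iff (by norm_num), ENNReal.rpow_two] at hcs
  have ha0 : ENNReal.ofReal (2 * r) ≠ 0 := by simpa using hr
  refine (ENNReal.mul_le_mul_iff_right ha0 ENNReal.ofReal_ne_top).1 ?_
  calc ENNReal.ofReal (2 * r) * (ENNReal.ofReal (2 * r) * μ univ ^ 2)
      = (ENNReal.ofReal (2 * r) * μ univ) ^ 2 := by ring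
    _ ≤ _ := hcs.trans (mul_le_mul_left hsq _)
    _ = _ := by ring

/-- The projection theorem for compact sets of positive `s`-dimensional content, `s > 1`. -/
lemma ae_volume_proj_pos {s : ℝ} (hs : 1 < s) {C : Set E} (hC : IsCompact C)
    (hpos : 0 < content (wt s) C) :
    ∀ᵐ θ ∂(volume.restrict (Icc (-(π / 2)) (π / 2))), 0 < volume (proj θ '' C) := by
  have hw0 : wt s 0 ≠ ∞ := by simp [wt]
  choose μ hfin hcompl hmass hsq using fun n => exists_frostman (wt s) hw0 hC n
  set m := content (wt s) C
  have hm : m ≠ ∞ := content_ne_top hw0 hC.isBounded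
  let F : ℕ → ℝ → ℝ≥0∞ := fun n θ =>
    2 ^ n * ((μ n).prod (μ n)) (Prod.mk θ ⁻¹' nearPairs n)
  have hF : ∀ n, Measurable (F n) := fun n =>
    (measurable_measure_prodMk_left (measurableSet_nearPairs n)).const_mul _
  set B := ENNReal.ofReal (8 * π) * (m + ∑' k, 2 ^ (k + 1) * (9 * wt s k)) * m
  have hB : B ≠ ∞ := ENNReal.mul_ne_top (ENNReal.mul_ne_top ENNReal.ofReal_ne_top
    (ENNReal.add_ne_top.2 ⟨hm, tsum_wt_ne_top hs⟩)) hm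
  have hFB : ∀ n, ∫⁻ θ in Icc (-(π / 2)) (π / 2), F n θ ≤ B := fun n => by
    have h := lintegral_nearPairs_le (hsq n)
    rwa [hmass n] at h
  have hfatou : ∫⁻ θ in Icc (-(π / 2)) (π / 2), Filter.liminf (fun n => F n θ) Filter.atTop ≤ B :=
    (lintegral_liminf_le hF).trans
      (Filter.liminf_le_of_frequently_le' (Filter.Frequently.of_forall hFB))
  filter_upwards [ae_lt_top (Measurable.liminf hF) (ne_top_of_le_ne_top hB hfatou)] with θ hθ
  have hproj : Continuous (proj θ) := by
    unfold proj
    fun_prop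
  have hkey : ∀ n, 2 * m ^ 2 ≤ volume (cthickening ((1 / 2) ^ n) (proj θ '' C)) * F n θ := by
    intro n
    have h := sq_mass_le (hcompl n) hproj.measurable (r := (1 / 2) ^ n) (by positivity)
    have hset : {z : E × E | |proj θ z.1 - proj θ z.2| ≤ 2 * (1 / 2) ^ n} =
        Prod.mk θ ⁻¹' nearPairs n := by
      ext z
      have : proj θ z.1 - proj θ z.2 = proj θ (z.1 - z.2) := by
        simp only [proj, PiLp.sub_apply]; ring
      simp [nearPairs, this]
    rw [hmass n, hset] at h
    have h2 : (2 : ℝ≥0∞) ^ n * ENNReal.ofReal (2 * (1 / 2) ^ n) = 2 := by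
      rw [show (2 : ℝ≥0∞) = ENNReal.ofReal 2 by norm_num, ← ENNReal.ofReal_pow (by norm_num),
        ← ENNReal.ofReal_mul (by positivity)]
      congr 1
      rw [mul_left_comm, ← mul_pow]
      norm_num
    calc 2 * m ^ 2 = 2 ^ n * (ENNReal.ofReal (2 * (1 / 2) ^ n) * m ^ 2) := by
          rw [← mul_assoc, h2]
      _ ≤ 2 ^ n * _ := mul_le_mul_right h _
      _ = _ := by simp only [F]; ring
  by_contra hzero
  have hzero' : volume (proj θ '' C) = 0 := by simpa using hzero
  have hlim := (tendsto_measure_cthickening_of_isCompact (μ := volume)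
    (hC.image hproj)).comp (tendsto_pow_atTop_nhds_zero_of_lt_one (r := (1 / 2 : ℝ))
      (by norm_num) (by norm_num))
  rw [hzero'] at hlim
  obtain ⟨b, hb1, hb2⟩ := exists_between hθ
  have hlim2 := ENNReal.Tendsto.mul_const hlim (Or.inr hb2.ne)
  rw [zero_mul] at hlim2
  have hm0 : 0 < 2 * m ^ 2 := ENNReal.mul_pos (by norm_num) (pow_ne_zero _ hpos.ne')
  obtain ⟨n, hn1, hn2⟩ :=
    ((Filter.frequently_lt_of_liminf_lt (by isBoundedDefault) hb1).and_eventually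
      (hlim2.eventually (gt_mem_nhds hm0))).exists
  exact absurd (hkey n) (not_le.2 (lt_of_le_of_lt (mul_le_mul_right hn1.le _) hn2))

/-- **Marstrand's projection theorem**: if `K ⊂ ℝ²` is Borel with Hausdorff dimension
greater than one, then for almost every `θ ∈ [−π/2, π/2]` the projection of `K` onto
`L_θ` has positive Lebesgue measure. -/
theorem marstrand (K : Set E) (hK : MeasurableSet K) (hdim : 1 < dimH K) :
    ∀ᵐ θ ∂(volume.restrict (Set.Icc (-(π / 2)) (π / 2))),
      0 < volume (proj θ '' K) := by
  obtain ⟨s, hs1, hsK⟩ := ENNReal.lt_iff_exists_nnreal_btwn.1 hdim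
  have hs : (1 : ℝ) < s := by exact_mod_cast hs1
  have hpos : 0 < content (wt s) K := by
    refine pos_iff_ne_zero.2 fun h0 => ?_
    have h1 := hausdorffMeasure_eq_zero (zero_lt_one.trans hs) h0
    rw [hausdorffMeasure_of_lt_dimH hsK] at h1
    exact ENNReal.top_ne_zero h1
  obtain ⟨C, hCK, hC, hCpos⟩ := exists_compact_content_pos _ hK hpos
  filter_upwards [ae_volume_proj_pos hs hC hCpos] with θ hθ
  exact hθ.trans_le (measure_mono (image_mono hCK))
end
end

section
/- Let K ⊂ ℝ² be an s-set with s > 1 and suppose that for every Borel subset X ⊂ K with m_s(X) > 0 one has m(proj_θ(X)) > 0 for m-almost every θ. Then for m-almost every θ ∈ ℝ, the push-forward measure μ_θ = (proj_θ)_*(m_s|_K) is absolutely continuous with respect to one-dimensional Lebesgue measure on L_θ. -/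
/-!
The argument is potential-theoretic. Let `μ` be the restriction of `μH[s]` to `K`.

* A Vitali covering argument (`hausdorffMeasure_setOf_density_top`) shows that at `μ`-almost every
  `x` the measure satisfies `μ (B(x, r)) ≤ C r ^ s` at all dyadic scales. As `s > 1`, the
  1-potential `∫ |x - y|⁻¹ dμ(y)` is then finite at such `x` (`lintegral_inv_edist_lt_top`).
* Transversality (`volume_proj_close_le`): for `θ` in an interval of length one, the set of `θ`
  with `|proj θ x - proj θ y| ≤ r` has measure at most `2π r / |x - y|`. With Fatou and Tonelli,
  a finite 1-potential at `x` forces `liminf_r μ_θ (B(proj θ x, r)) / 2r < ∞` for almost every `θ`.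
* By Fubini, for almost every `θ` the lower derivative of `μ_θ` with respect to Lebesgue measure is
  finite `μ_θ`-almost everywhere. By the Besicovitch differentiation theorem the density of
  Lebesgue measure with respect to `μ_θ` is therefore positive `μ_θ`-almost everywhere, which is
  absolute continuity of `μ_θ` (`map_absolutelyContinuous_of_liminf`).
-/

open MeasureTheory Set Metric ENNReal Real

noncomputable section

open Filter Topology

/-! ### Upper density and the 1-potential -/

/-- The set of points of infinite upper `s`-density (tested at dyadic scales) of a finite measure is
`μH[s]`-null: disjoint balls with `N r ^ s < μ B`, enlarged five times, cover it and have
`∑ (10 r) ^ s ≤ 10 ^ s μ(univ) / N`. -/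
lemma hausdorffMeasure_setOf_density_top (s : ℝ) (hs : 0 < s) (μ : Measure E)
    [IsFiniteMeasure μ] :
    μH[s] {x : E | ∀ N : ℕ, ∃ k : ℕ, (N : ℝ≥0∞) * ENNReal.ofReal ((1 / 2) ^ k) ^ s <
      μ (closedBall x ((1 / 2) ^ k))} = 0 := by
  set A := {x : E | ∀ N : ℕ, ∃ k : ℕ, (N : ℝ≥0∞) * ENNReal.ofReal ((1 / 2) ^ k) ^ s <
      μ (closedBall x ((1 / 2) ^ k))} with hA
  have key : ∀ N : ℕ, ∃ (r : E → ℝ) (u : Set E), (∀ x, 0 < r x) ∧ u ⊆ A ∧ u.Countable ∧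
      (∀ x ∈ u, (N : ℝ≥0∞) * ENNReal.ofReal (r x) ^ s < μ (closedBall x (r x))) ∧
      (u.PairwiseDisjoint fun x => closedBall x (r x)) ∧
      A ⊆ ⋃ x : u, closedBall (x : E) (5 * r x) := by
    intro N
    have h1 : ∀ x : E, ∃ k : ℕ, x ∈ A → (N : ℝ≥0∞) * ENNReal.ofReal ((1 / 2) ^ k) ^ s <
      μ (closedBall x ((1 / 2) ^ k)) := by
      intro x
      by_cases hx : x ∈ A
      · obtain ⟨k, hk⟩ := hx N
        exact ⟨k, fun _ => hk⟩
      · exact ⟨0, fun h => absurd h hx⟩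
    choose k hk using h1
    obtain ⟨u, huA, hud, huc⟩ := Vitali.exists_disjoint_subfamily_covering_enlargement_closedBall
      A (fun x : E => x) (fun x => (1 / 2 : ℝ) ^ k x) 1
      (fun a _ => pow_le_one₀ (by norm_num) (by norm_num)) 5 (by norm_num)
    have hpos : ∀ x, 0 < (1 / 2 : ℝ) ^ k x := fun x => by positivity
    refine ⟨fun x => (1 / 2 : ℝ) ^ k x, u, hpos, huA, ?_, fun x hx => hk x (huA hx), hud, ?_⟩
    · refine hud.countable_of_nonempty_interior fun x _ => ⟨x, ?_⟩
      exact ball_subset_interior_closedBall (mem_ball_self (hpos x))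
    · intro x hx
      obtain ⟨b, hb, hxb⟩ := huc x hx
      exact mem_iUnion.2 ⟨⟨b, hb⟩, hxb (mem_closedBall_self (hpos x).le)⟩
  choose r u hr huA hu hμ hd hcov using key
  have hc : ∀ N, Countable (u N) := fun N => (hu N).to_subtype
  have hdiam : ∀ (N : ℕ) (x : u N), ediam (closedBall (x : E) (5 * r N x)) ≤
      10 * ENNReal.ofReal (r N x) := by
    intro N x
    refine (Metric.ediam_le_of_forall_dist_le (C := 10 * r N x) ?_).trans ?_
    · intro y hy z hz
      have := dist_triangle_right y z (x : E)
      rw [mem_closedBall] at hy hz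
      linarith
    · rw [ENNReal.ofReal_mul (by norm_num)]
      simp
  -- the selected radii satisfy `r ^ s ≤ μ univ / N`, so the covers get finer as `N` grows
  have hdiv : Tendsto (fun N : ℕ => μ univ / N) atTop (𝓝 0) := by
    have := ENNReal.Tendsto.const_div (a := μ univ) ENNReal.tendsto_nat_nhds_top
      (Or.inr (measure_ne_top μ univ))
    simpa using this
  have hrs : ∀ N, 0 < N → ∀ x ∈ u N, ENNReal.ofReal (r N x) ^ s ≤
      μ (closedBall x (r N x)) / N := by
    intro N hN x hx
    rw [ENNReal.le_div_iff_mul_le (by simp [hN.ne']) (by simp), mul_comm]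
    exact (hμ N x hx).le
  have hle := Measure.hausdorffMeasure_le_liminf_tsum (β := ℕ) (ι := fun N => u N) s A (l := atTop)
    (fun N => 10 * (μ univ / N) ^ (1 / s)) ?_
    (fun N x => closedBall (x : E) (5 * r N x)) ?_ (Eventually.of_forall hcov)
  · have hlim : Tendsto (fun N : ℕ => 10 ^ s * (μ univ / N)) atTop (𝓝 0) := by
      simpa using ENNReal.Tendsto.const_mul (a := (10 : ℝ≥0∞) ^ s) hdiv
        (Or.inr (ENNReal.rpow_ne_top_of_nonneg hs.le (by simp)))
    refine le_antisymm (hle.trans ?_) bot_le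
    rw [← hlim.liminf_eq]
    refine liminf_le_liminf ?_
    filter_upwards [eventually_gt_atTop 0] with N hN
    calc ∑' x : u N, ediam (closedBall (x : E) (5 * r N x)) ^ s
        ≤ ∑' x : u N, 10 ^ s * (μ (closedBall x (r N x)) * (N : ℝ≥0∞)⁻¹) := by
          refine ENNReal.tsum_le_tsum fun x => ?_
          refine (ENNReal.rpow_le_rpow (hdiam N x) hs.le).trans ?_
          rw [ENNReal.mul_rpow_of_nonneg _ _ hs.le, ← div_eq_mul_inv]
          gcongr
          exact hrs N hN x x.2
      _ = 10 ^ s * ((∑' x : u N, μ (closedBall x (r N x))) / N) := by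
          rw [ENNReal.tsum_mul_left, ENNReal.tsum_mul_right, div_eq_mul_inv]
      _ ≤ 10 ^ s * (μ univ / N) := by
          gcongr
          refine tsum_measure_le_measure_univ
            (fun x => measurableSet_closedBall.nullMeasurableSet) ?_
          intro x y hxy
          exact (hd N x.2 y.2 (fun h => hxy (Subtype.ext h))).aedisjoint
  · have h1 := ((ENNReal.continuous_rpow_const (y := 1 / s)).tendsto 0).comp hdiv
    have h2 := ENNReal.Tendsto.const_mul (a := (10 : ℝ≥0∞)) h1 (Or.inr (by simp))
    simpa [Function.comp_def, ENNReal.zero_rpow_of_pos (inv_pos.2 hs)] using h2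
  · filter_upwards [eventually_gt_atTop 0] with N hN x
    refine (hdiam N x).trans ?_
    gcongr
    rw [one_div, ENNReal.le_rpow_inv_iff hs]
    refine (hrs N hN x x.2).trans ?_
    gcongr
    exact subset_univ _

/-- Dyadic decomposition of the Riesz kernel: only the balls containing `y` contribute, and the
smallest of them has radius comparable to `dist x y`. For `y = x` both sides are `⊤`. -/
lemma inv_edist_le_tsum (x y : E) :
    (edist x y)⁻¹ ≤ 1 + ∑' k : ℕ, (closedBall x ((1 / 2) ^ k)).indicator
      (fun _ => (2 : ℝ≥0∞) ^ (k + 1)) y := by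
  rcases eq_or_ne x y with rfl | hxy
  · have : ∀ k : ℕ, (closedBall x ((1 / 2) ^ k)).indicator
      (fun _ => (2 : ℝ≥0∞) ^ (k + 1)) x = 2 ^ (k + 1) := fun k =>
      indicator_of_mem (mem_closedBall_self (by positivity)) _
    simp only [this]
    have h1 : ∑' k : ℕ, (2 : ℝ≥0∞) ^ (k + 1) = ⊤ := by
      refine top_unique ?_
      rw [← ENNReal.tsum_const_eq_top_of_ne_zero (α := ℕ) (c := 1) one_ne_zero]
      exact ENNReal.tsum_le_tsum fun k => one_le_pow₀ (by norm_num)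
    simp [h1]
  · have hd : 0 < dist x y := dist_pos.2 hxy
    rcases le_or_gt (dist x y) 1 with h | h
    · obtain ⟨k, hk1, hk2⟩ := exists_nat_pow_near_of_lt_one hd h (y := (1 / 2 : ℝ))
        (by norm_num) (by norm_num)
      refine le_trans ?_ le_add_self
      refine le_trans ?_ (ENNReal.le_tsum k)
      rw [indicator_of_mem (by rwa [mem_closedBall, dist_comm]), edist_dist,
        ENNReal.inv_le_iff_inv_le]
      refine le_trans (le_of_eq ?_) (ENNReal.ofReal_le_ofReal hk1.le)
      rw [ENNReal.ofReal_pow (by norm_num), one_div, ENNReal.ofReal_inv_of_pos (by norm_num),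
        ENNReal.inv_pow]
      simp
    · refine le_trans ?_ le_self_add
      rw [edist_dist, ENNReal.inv_le_one]
      simpa using h.le

/-- A power bound with exponent `s > 1` on the mass of dyadic balls makes the 1-potential finite. -/
lemma lintegral_inv_edist_lt_top (s : ℝ) (hs : 1 < s) (μ : Measure E) [IsFiniteMeasure μ] (x : E)
    (N : ℕ) (hN : ∀ k : ℕ, μ (closedBall x ((1 / 2) ^ k)) ≤
      (N : ℝ≥0∞) * ENNReal.ofReal ((1 / 2) ^ k) ^ s) :
    ∫⁻ y, (edist x y)⁻¹ ∂μ < ⊤ := by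
  have hq : (ENNReal.ofReal ((1 / 2) ^ (s - 1))) < 1 := by
    rw [ENNReal.ofReal_lt_one]
    exact Real.rpow_lt_one (by norm_num) (by norm_num) (by linarith)
  set q := ENNReal.ofReal ((1 / 2) ^ (s - 1)) with hqdef
  have hterm : ∀ k : ℕ, (2 : ℝ≥0∞) ^ (k + 1) * ENNReal.ofReal ((1 / 2) ^ k) ^ s = 2 * q ^ k := by
    intro k
    have h2 : (2 : ℝ≥0∞) = ENNReal.ofReal 2 := by simp
    rw [h2, hqdef, ENNReal.ofReal_rpow_of_pos (by positivity), ← ENNReal.ofReal_pow (by norm_num),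
      ← ENNReal.ofReal_mul (by positivity), ← ENNReal.ofReal_pow (by positivity),
      ← ENNReal.ofReal_mul (by positivity)]
    congr 1
    rw [← Real.rpow_natCast ((1 / 2) ^ (s - 1)), ← Real.rpow_mul (by norm_num),
      ← Real.rpow_natCast (1 / 2), ← Real.rpow_mul (by norm_num), pow_succ, mul_comm _ (2 : ℝ),
      mul_assoc]
    congr 1
    have h3 : (2 : ℝ) ^ k = (1 / 2 : ℝ) ^ (-(k : ℝ)) := by
      rw [Real.rpow_neg (by norm_num), Real.rpow_natCast]
      simp
    rw [h3, ← Real.rpow_add (by norm_num)]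
    congr 1
    ring
  calc ∫⁻ y, (edist x y)⁻¹ ∂μ
      ≤ ∫⁻ y, (1 + ∑' k : ℕ, (closedBall x ((1 / 2) ^ k)).indicator
          (fun _ => (2 : ℝ≥0∞) ^ (k + 1)) y) ∂μ := lintegral_mono fun y => inv_edist_le_tsum x y
    _ = μ univ + ∑' k : ℕ, 2 ^ (k + 1) * μ (closedBall x ((1 / 2) ^ k)) := by
        rw [lintegral_add_left measurable_const, lintegral_tsum fun k =>
          (measurable_const.indicator measurableSet_closedBall).aemeasurable]
        simp [lintegral_indicator_const measurableSet_closedBall]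
    _ ≤ μ univ + ∑' k : ℕ, (N * 2) * q ^ k := by
        refine add_le_add le_rfl (ENNReal.tsum_le_tsum fun k => ?_)
        calc _ ≤ 2 ^ (k + 1) * ((N : ℝ≥0∞) * ENNReal.ofReal ((1 / 2) ^ k) ^ s) := by
              gcongr; exact hN k
          _ = N * (2 ^ (k + 1) * ENNReal.ofReal ((1 / 2) ^ k) ^ s) := by ring
          _ = _ := by rw [hterm, mul_assoc]
    _ < ⊤ := by
        rw [ENNReal.tsum_mul_left, ENNReal.tsum_geometric]
        refine ENNReal.add_lt_top.2 ⟨measure_lt_top _ _, ENNReal.mul_lt_top ?_ ?_⟩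
        · exact ENNReal.mul_lt_top (by simp) (by simp)
        · rw [ENNReal.inv_lt_top]
          exact tsub_pos_of_lt hq

/-! ### Transversality of projections -/

lemma continuous_proj : Continuous fun p : ℝ × E => proj p.1 p.2 := by
  unfold proj
  fun_prop

/-- Transversality: two directions `θ, φ` at distance at most one, both of which bring `x` and `y`
`r`-close, satisfy `|x - y| |sin (θ - φ)| ≤ 4 r`, so they are close to each other. -/
lemma volume_proj_close_le (n : ℤ) (x y : E) (r : ℝ) (hr : 0 < r) :
    (volume.restrict (Icc (n : ℝ) (n + 1))) {θ | |proj θ y - proj θ x| ≤ r} ≤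
      ENNReal.ofReal (2 * π * r) * (edist x y)⁻¹ := by
  rcases eq_or_ne x y with rfl | hxy
  · rw [edist_self, ENNReal.inv_zero, ENNReal.mul_top]
    · exact le_top
    · simp only [ne_eq, ENNReal.ofReal_eq_zero, not_le]; positivity
  have hd : 0 < dist x y := dist_pos.2 hxy
  rw [Measure.restrict_apply' measurableSet_Icc]
  refine (Real.volume_le_diam _).trans ?_
  rw [edist_dist, ← ENNReal.ofReal_inv_of_pos hd, ← ENNReal.ofReal_mul (by positivity)]
  refine Metric.ediam_le_of_forall_dist_le ?_
  rintro θ ⟨hθ, hθI⟩ φ ⟨hφ, hφI⟩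
  simp only [mem_ofPred_eq, proj] at hθ hφ
  set a := y 0 - x 0 with ha
  set b := y 1 - x 1 with hb
  have eθ : y 0 * cos θ + y 1 * sin θ - (x 0 * cos θ + x 1 * sin θ) = a * cos θ + b * sin θ := by
    rw [ha, hb]; ring
  have eφ : y 0 * cos φ + y 1 * sin φ - (x 0 * cos φ + x 1 * sin φ) = a * cos φ + b * sin φ := by
    rw [ha, hb]; ring
  rw [eθ] at hθ
  rw [eφ] at hφ
  have bound : ∀ u v c d : ℝ, |u| ≤ r → |v| ≤ r → |c| ≤ 1 → |d| ≤ 1 → |u * c - v * d| ≤ 2 * r := by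
    intro u v c d hu hv hc hd
    have h1 : |u * c| ≤ r * 1 := by rw [abs_mul]; gcongr
    have h2 : |v * d| ≤ r * 1 := by rw [abs_mul]; gcongr
    have := abs_sub (u * c) (v * d)
    linarith
  have h1 : |a| * |sin (θ - φ)| ≤ 2 * r := by
    have e : a * sin (θ - φ) =
        (a * cos φ + b * sin φ) * sin θ - (a * cos θ + b * sin θ) * sin φ := by
      rw [Real.sin_sub]; ring
    rw [← abs_mul, e]
    exact bound _ _ (sin θ) (sin φ) hφ hθ (abs_sin_le_one _) (abs_sin_le_one _)
  have h2 : |b| * |sin (θ - φ)| ≤ 2 * r := by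
    have e : b * sin (θ - φ) =
        (a * cos θ + b * sin θ) * cos φ - (a * cos φ + b * sin φ) * cos θ := by
      rw [Real.sin_sub]; ring
    rw [← abs_mul, e]
    exact bound _ _ (cos φ) (cos θ) hθ hφ (abs_cos_le_one _) (abs_cos_le_one _)
  -- `a` and `b` are controlled separately, which loses only a factor two
  have h3 : dist x y ≤ |a| + |b| := by
    rw [EuclideanSpace.dist_eq, Fin.sum_univ_two, Real.dist_eq, Real.dist_eq,
      abs_sub_comm (x 0), abs_sub_comm (x 1)]
    refine Real.sqrt_le_iff.2 ⟨by positivity, ?_⟩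
    nlinarith [mul_nonneg (abs_nonneg a) (abs_nonneg b)]
  have hle : |θ - φ| ≤ 1 := by
    rw [abs_le]; constructor <;> linarith [hθI.1, hθI.2, hφI.1, hφI.2]
  have h4 := Real.mul_abs_le_abs_sin (x := θ - φ) (by linarith [Real.pi_gt_three])
  have h5 : dist x y * (2 / π * |θ - φ|) ≤ 4 * r := by
    calc _ ≤ (|a| + |b|) * |sin (θ - φ)| := by gcongr
      _ ≤ _ := by linarith
  rw [Real.dist_eq, ← div_eq_mul_inv, le_div_iff₀ hd]
  have h6 : dist x y * (2 / π * |θ - φ|) = (|θ - φ| * dist x y) * (2 / π) := by ring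
  rw [h6, ← le_div_iff₀ (by positivity)] at h5
  refine h5.trans (le_of_eq ?_)
  field_simp
  ring

/-! ### Lower density of the projected measures -/

/-- The scales at which the projected measures are differentiated. -/
def scale (n : ℕ) : ℝ := 1 / (n + 1)

lemma scale_pos (n : ℕ) : 0 < scale n := by unfold scale; positivity

/-- The average density of `μ_θ` on the interval of radius `scale n` about `proj θ x`. -/
def projDensity (μ : Measure E) (n : ℕ) (θ : ℝ) (x : E) : ℝ≥0∞ :=
  μ {y | |proj θ y - proj θ x| ≤ scale n} / ENNReal.ofReal (2 * scale n)

lemma measurableSet_proj_close (n : ℕ) :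
    MeasurableSet {p : (ℝ × E) × E | |proj p.1.1 p.2 - proj p.1.1 p.1.2| ≤ scale n} := by
  refine (isClosed_le ?_ continuous_const).measurableSet
  have h1 : Continuous fun p : (ℝ × E) × E => proj p.1.1 p.2 :=
    continuous_proj.comp (by fun_prop : Continuous fun p : (ℝ × E) × E => (p.1.1, p.2))
  have h2 : Continuous fun p : (ℝ × E) × E => proj p.1.1 p.1.2 :=
    continuous_proj.comp (by fun_prop : Continuous fun p : (ℝ × E) × E => (p.1.1, p.1.2))
  exact (h1.sub h2).abs

lemma measurable_projDensity (μ : Measure E) [IsFiniteMeasure μ] (n : ℕ) :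
    Measurable fun p : ℝ × E => projDensity μ n p.1 p.2 :=
  (measurable_measure_prodMk_left (ν := μ) (measurableSet_proj_close n)).div_const _

lemma lintegral_projDensity_le (μ : Measure E) [IsFiniteMeasure μ] (m : ℤ) (n : ℕ) (x : E) :
    ∫⁻ θ in Icc (m : ℝ) (m + 1), projDensity μ n θ x ≤
      ENNReal.ofReal π * ∫⁻ y, (edist x y)⁻¹ ∂μ := by
  have hS : MeasurableSet {p : ℝ × E | |proj p.1 p.2 - proj p.1 x| ≤ scale n} :=
    (by fun_prop : Measurable fun p : ℝ × E => ((p.1, x), p.2)) (measurableSet_proj_close n)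
  have hr := scale_pos n
  have hswap : ∫⁻ θ in Icc (m : ℝ) (m + 1), μ {y | |proj θ y - proj θ x| ≤ scale n} =
      ∫⁻ y, (volume.restrict (Icc (m : ℝ) (m + 1))) {θ | |proj θ y - proj θ x| ≤ scale n} ∂μ :=
    (Measure.prod_apply hS).symm.trans (Measure.prod_apply_symm hS)
  have hmeas : Measurable fun y : E => (edist x y)⁻¹ := by fun_prop
  simp only [projDensity, div_eq_mul_inv]
  rw [lintegral_mul_const' _ _ (by simp [hr]), hswap]
  calc _ ≤ (∫⁻ y, ENNReal.ofReal (2 * π * scale n) * (edist x y)⁻¹ ∂μ) *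
        (ENNReal.ofReal (2 * scale n))⁻¹ := by
        gcongr with y
        exact volume_proj_close_le m x y _ hr
    _ = _ := by
        rw [lintegral_const_mul _ hmeas, mul_right_comm,
          ← ENNReal.ofReal_inv_of_pos (by positivity), ← ENNReal.ofReal_mul (by positivity)]
        congr 2
        field_simp

/-- Finiteness of the 1-potential at `x` gives, by Fatou, a finite lower density at `proj θ x` in
almost every direction. -/
lemma ae_liminf_projDensity_ne_top (μ : Measure E) [IsFiniteMeasure μ] (x : E)
    (hx : ∫⁻ y, (edist x y)⁻¹ ∂μ < ⊤) :
    ∀ᵐ θ ∂(volume : Measure ℝ), liminf (fun n => projDensity μ n θ x) atTop ≠ ⊤ := by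
  have hm : ∀ n, Measurable fun θ => projDensity μ n θ x := by
    intro n
    exact (measurable_projDensity μ n).of_uncurry_right
  rw [← Measure.restrict_univ (μ := (volume : Measure ℝ)), ← iUnion_Icc_intCast ℝ,
    ae_restrict_iUnion_iff]
  intro m
  have hfin : ∫⁻ θ in Icc (m : ℝ) (m + 1), liminf (fun n => projDensity μ n θ x) atTop ≠ ⊤ := by
    have hC : ENNReal.ofReal π * ∫⁻ y, (edist x y)⁻¹ ∂μ ≠ ⊤ :=
      (ENNReal.mul_lt_top ENNReal.ofReal_lt_top hx).ne
    refine ne_top_of_le_ne_top hC ?_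
    calc ∫⁻ θ in Icc (m : ℝ) (m + 1), liminf (fun n => projDensity μ n θ x) atTop
        ≤ liminf (fun n => ∫⁻ θ in Icc (m : ℝ) (m + 1), projDensity μ n θ x) atTop :=
          lintegral_liminf_le hm
      _ ≤ liminf (fun _ : ℕ => ENNReal.ofReal π * ∫⁻ y, (edist x y)⁻¹ ∂μ) atTop :=
          liminf_le_liminf (Eventually.of_forall fun n => lintegral_projDensity_le μ m n x)
      _ = ENNReal.ofReal π * ∫⁻ y, (edist x y)⁻¹ ∂μ := liminf_const _
  filter_upwards [ae_lt_top (Measurable.liminf hm) hfin] with θ hθ using hθ.ne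

/-- A projection with finite lower density almost everywhere is absolutely continuous: the density
of Lebesgue measure with respect to it is the inverse of a finite number, hence positive. -/
lemma map_absolutelyContinuous_of_liminf (μ : Measure E) [IsFiniteMeasure μ] (θ : ℝ)
    (h : ∀ᵐ x ∂μ, liminf (fun n => projDensity μ n θ x) atTop ≠ ⊤) :
    Measure.map (proj θ) μ ≪ volume := by
  have hπ : Measurable (proj θ) := by
    have : Continuous (proj θ) := by unfold proj; fun_prop
    exact this.measurable
  set ν := Measure.map (proj θ) μ with hν
  have hscale : Tendsto scale atTop (𝓝[>] 0) :=
    tendsto_nhdsWithin_iff.2 ⟨tendsto_one_div_add_atTop_nhds_zero_nat,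
      Eventually.of_forall scale_pos⟩
  have hpos : ∀ᵐ t ∂ν, (volume : Measure ℝ).rnDeriv ν t ≠ 0 := by
    refine (ae_map_iff hπ.aemeasurable ?_).2 ?_
    · exact (Measure.measurable_rnDeriv _ _ (measurableSet_singleton 0)).compl
    have hB := ae_of_ae_map hπ.aemeasurable (Besicovitch.ae_tendsto_rnDeriv volume ν)
    filter_upwards [h, hB] with x hx hBx h0
    -- the average densities are the reciprocals of the ratios converging to `rnDeriv volume ν`
    have h1 := (tendsto_inv_iff.2 (hBx.comp hscale)).liminf_eq
    refine hx ?_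
    rw [h0, ENNReal.inv_zero] at h1
    rw [← h1]
    congr 1
    ext n
    have hr := scale_pos n
    simp only [Function.comp_apply]
    rw [ENNReal.inv_div (Or.inl (measure_ne_top _ _)) (Or.inr (by simp [hr])), hν,
      Measure.map_apply hπ measurableSet_closedBall, Real.volume_closedBall]
    rfl
  refine Measure.AbsolutelyContinuous.mk fun A hA hA0 => ?_
  have h1 : ∫⁻ t in A, (volume : Measure ℝ).rnDeriv ν t ∂ν = 0 :=
    le_antisymm ((Measure.setLIntegral_rnDeriv_le A).trans hA0.le) bot_le
  rw [lintegral_eq_zero_iff (Measure.measurable_rnDeriv _ _)] at h1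
  have h2 : ∀ᵐ t ∂ν.restrict A, False := by
    filter_upwards [h1, ae_restrict_of_ae hpos] with t ht ht' using ht' ht
  simpa using h2

/-! ### Absolute continuity for almost every direction -/

/-- If almost every projection of every positive-measure Borel subset of the `s`-set `K`
has positive Lebesgue measure, then for almost every `θ` the push-forward
`μ_θ = (proj_θ)_*(m_s|_K)` is absolutely continuous with respect to Lebesgue measure. -/
theorem pushforward_abs_continuous (s : ℝ) (hs : 1 < s) (K : Set E)
    (hK : MeasurableSet K) (hdim : dimH K = ENNReal.ofReal s)
    (h0 : 0 < μH[s] K) (hfin : μH[s] K < ⊤)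
    (hproj : ∀ X : Set E, X ⊆ K → MeasurableSet X → 0 < μH[s] X →
      ∀ᵐ θ ∂(volume : Measure ℝ), 0 < volume (proj θ '' X)) :
    ∀ᵐ θ ∂(volume : Measure ℝ),
      Measure.map (proj θ) (μH[s].restrict K) ≪ volume := by
  set μ : Measure E := μH[s].restrict K with hμ
  have : IsFiniteMeasure μ := ⟨by simpa [hμ] using hfin⟩
  have hpot : ∀ᵐ x ∂μ, ∀ᵐ θ ∂(volume : Measure ℝ),
      liminf (fun n => projDensity μ n θ x) atTop ≠ ⊤ := by
    have hnull := hausdorffMeasure_setOf_density_top s (by linarith) μ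
    have hae : ∀ᵐ x ∂μ, ¬ ∀ N : ℕ, ∃ k : ℕ, (N : ℝ≥0∞) * ENNReal.ofReal ((1 / 2) ^ k) ^ s <
        μ (closedBall x ((1 / 2) ^ k)) := by
      refine ae_restrict_of_ae ?_
      rw [ae_iff]
      simpa only [not_not] using hnull
    filter_upwards [hae] with x hx
    push Not at hx
    obtain ⟨N, hN⟩ := hx
    exact ae_liminf_projDensity_ne_top μ x (lintegral_inv_edist_lt_top s hs μ x N hN)
  have hmeas : Measurable fun p : ℝ × E => liminf (fun n => projDensity μ n p.1 p.2) atTop :=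
    Measurable.liminf fun n => measurable_projDensity μ n
  have hswap : ∀ᵐ θ ∂(volume : Measure ℝ), ∀ᵐ x ∂μ,
      liminf (fun n => projDensity μ n θ x) atTop ≠ ⊤ :=
    (Measure.ae_ae_comm (hmeas (measurableSet_singleton ⊤)).compl).2 hpot
  filter_upwards [hswap] with θ hθ using map_absolutelyContinuous_of_liminf μ θ hθ
end
end
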